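/- q-deformed inverse Cartan matrix identity: let M, N ≥ 0 be integers with M ≠ N and set n′ = M+N+1. Then for every q ∈ ℂ∖{0} with q² ≠ 1, every integer m ≥ 1, and all 1 ≤ i, j ≤ n′: Σ_{k=1}^{n′} [α_{ik} m]_q · [β_{ik} m]_q · [A_{kj} m]_q = δ_{ij} · [(M−N) m]_q · ([m]_q)². (This identity is equivalent to the commutation relation [h*_{i,m}, h_{j,n}] = δ_{ij} δ_{m+n,0} [m]_q²/m for the dual bosonic generators h*_{i,m} = Σ_j ([α_{ij}m]_q[β_{ij}m]_q/([(M−N)m]_q[m]_q)) h_{j,m} at level c = 1.) -/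

import Mathlib

noncomputable section

/-- The q-integer `[a]_q = (q^a − q^{−a})/(q − q^{−1})`. -/
def qint (q : ℂ) (a : ℤ) : ℂ := (q ^ a - q ^ (-a)) / (q - q⁻¹)

/-- `α_{ij}`: `min(i,j)` (1-based) if `min(i,j) ≤ M+1`, else `2(M+1) − min(i,j)`. -/
def alphaC (M : ℕ) {n' : ℕ} (i j : Fin n') : ℤ :=
  if min (i : ℕ) (j : ℕ) ≤ M then (min (i : ℕ) (j : ℕ) : ℤ) + 1
  else (2 * (M : ℤ) + 1) - (min (i : ℕ) (j : ℕ) : ℤ)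

/-- `β_{ij}`: `M − N − max(i,j)` (1-based) if `max(i,j) ≤ M+1`,
else `−M − N − 2 + max(i,j)`. -/
def betaC (M N : ℕ) {n' : ℕ} (i j : Fin n') : ℤ :=
  if max (i : ℕ) (j : ℕ) ≤ M then (M : ℤ) - (N : ℤ) - ((max (i : ℕ) (j : ℕ) : ℤ) + 1)
  else -(M : ℤ) - (N : ℤ) - 2 + ((max (i : ℕ) (j : ℕ) : ℤ) + 1)

/-- The Cartan matrix of `sl(M+1|N+1)` in the distinguished basis
(indices 1-based, here realised on `Fin (M+N+1)` with 0-based values). -/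
def CartanSL (M N : ℕ) (i j : Fin (M + N + 1)) : ℤ :=
  if i = j then (if (i : ℕ) < M then 2 else if (i : ℕ) = M then 0 else -2)
  else if (i : ℕ) + 1 = (j : ℕ) ∨ (j : ℕ) + 1 = (i : ℕ) then
    (if min (i : ℕ) (j : ℕ) < M then -1 else 1)
  else 0

lemma qint_zero (q : ℂ) : qint q 0 = 0 := by simp [qint]

lemma qint_neg (q : ℂ) (a : ℤ) : qint q (-a) = -qint q a := by
  simp only [qint, neg_neg]
  ring

/-- The addition formula `[x + c] [y] - [x] [y - c] = [c] [x + y]` for q-integers. -/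
lemma qint_add_mul_sub (q : ℂ) (hq : q ≠ 0) (x y c : ℤ) :
    qint q (x + c) * qint q y - qint q x * qint q (y - c) = qint q c * qint q (x + y) := by
  simp only [qint, neg_add, neg_sub, zpow_add₀ hq, zpow_sub₀ hq, zpow_neg, div_eq_mul_inv]
  have hx := zpow_ne_zero x hq
  have hy := zpow_ne_zero y hq
  have hc := zpow_ne_zero c hq
  generalize (q - q⁻¹)⁻¹ = r
  field_simp
  ring

/-- The three-term recurrence for q-integers with steps `s, t = ± m`. -/
lemma qint_recurrence (q : ℂ) (hq : q ≠ 0) (x s t : ℤ) (hst : s = t ∨ s = -t) :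
    qint q (x + s) * qint q s - qint q x * qint q (s + t) + qint q (x - t) * qint q t = 0 := by
  rcases hst with rfl | rfl
  · have h := qint_add_mul_sub q hq s x s
    rw [add_comm s x] at h
    linear_combination -h
  · rw [neg_add_cancel, qint_zero, qint_neg, ← sub_eq_add_neg]
    ring

/-- `α_{ij}` as a function of the 0-based value `k` of `min(i,j)`. -/
def alphaAt (M k : ℤ) : ℤ := if k ≤ M then k + 1 else 2 * M + 1 - k

/-- `β_{ij}` as a function of the 0-based value `k` of `max(i,j)`. -/
def betaAt (M N k : ℤ) : ℤ := if k ≤ M then M - N - (k + 1) else -M - N - 2 + (k + 1)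

/-- The off-diagonal entry of the Cartan matrix joining the 0-based indices `k` and `k + 1`. -/
def cartanOff (M k : ℤ) : ℤ := if k < M then -1 else 1

/-- The product `[α_{ik} m] [β_{ik} m]`, extended to all integers `i`, `k`. -/
def alphaBetaAt (q : ℂ) (m M N i k : ℤ) : ℂ :=
  qint q (alphaAt M (min i k) * m) * qint q (betaAt M N (max i k) * m)

lemma alphaAt_sub_one (M j : ℤ) : alphaAt M (j - 1) = alphaAt M j + cartanOff M (j - 1) := by
  unfold alphaAt cartanOff; split_ifs <;> omega

lemma alphaAt_add_one (M j : ℤ) : alphaAt M (j + 1) = alphaAt M j - cartanOff M j := by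
  unfold alphaAt cartanOff; split_ifs <;> omega

lemma betaAt_sub_one (M N j : ℤ) :
    betaAt M N (j - 1) = betaAt M N j - cartanOff M (j - 1) := by
  unfold betaAt cartanOff; split_ifs <;> omega

lemma betaAt_add_one (M N j : ℤ) : betaAt M N (j + 1) = betaAt M N j + cartanOff M j := by
  unfold betaAt cartanOff; split_ifs <;> omega

lemma alphaAt_add_betaAt (M N j : ℤ) : alphaAt M j + betaAt M N j = M - N := by
  unfold alphaAt betaAt; split_ifs <;> omega

lemma cartanOff_eq_or (M k : ℤ) : cartanOff M k = 1 ∨ cartanOff M k = -1 := by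
  unfold cartanOff; split_ifs <;> simp

/-- The identity for the bi-infinite extension of the Cartan matrix, whose diagonal entry at `j` is
minus the sum of the two off-diagonal entries next to it. -/
lemma alphaBetaAt_cartan (q : ℂ) (hq : q ≠ 0) (m M N i j : ℤ) :
    alphaBetaAt q m M N i (j - 1) * qint q (cartanOff M (j - 1) * m)
      - alphaBetaAt q m M N i j * qint q ((cartanOff M (j - 1) + cartanOff M j) * m)
      + alphaBetaAt q m M N i (j + 1) * qint q (cartanOff M j * m)
    = if i = j then qint q ((M - N) * m) * qint q m ^ 2 else 0 := by
  have hst : cartanOff M (j - 1) * m = cartanOff M j * m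
      ∨ cartanOff M (j - 1) * m = -(cartanOff M j * m) := by
    rcases cartanOff_eq_or M (j - 1) with h | h <;>
      rcases cartanOff_eq_or M j with h' | h' <;> simp [h, h']
  have hts : cartanOff M j * m = cartanOff M (j - 1) * m
      ∨ cartanOff M j * m = -(cartanOff M (j - 1) * m) := by
    omega
  have hsq : qint q (cartanOff M j * m) ^ 2 = qint q m ^ 2 := by
    rcases cartanOff_eq_or M j with h | h <;> simp [h, qint_neg]
  rcases lt_trichotomy i j with hij | rfl | hij
  · rw [if_neg hij.ne]
    simp only [alphaBetaAt, min_eq_left hij.le, max_eq_right hij.le,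
      min_eq_left (show i ≤ j - 1 by omega), max_eq_right (show i ≤ j - 1 by omega),
      min_eq_left (show i ≤ j + 1 by omega), max_eq_right (show i ≤ j + 1 by omega),
      betaAt_sub_one, betaAt_add_one, add_mul, sub_mul]
    have h := qint_recurrence q hq (betaAt M N j * m) _ _ hts
    rw [add_comm (cartanOff M j * m)] at h
    linear_combination qint q (alphaAt M i * m) * h
  · rw [if_pos rfl, ← alphaAt_add_betaAt M N i]
    simp only [alphaBetaAt, min_self, max_self,
      min_eq_right (show i - 1 ≤ i by omega), max_eq_left (show i - 1 ≤ i by omega),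
      min_eq_left (show i ≤ i + 1 by omega), max_eq_right (show i ≤ i + 1 by omega),
      alphaAt_sub_one, betaAt_add_one, add_mul]
    have h := qint_recurrence q hq (alphaAt M i * m) _ _ hst
    have h' := qint_add_mul_sub q hq (alphaAt M i * m - cartanOff M i * m)
      (betaAt M N i * m + cartanOff M i * m) (cartanOff M i * m)
    rw [sub_add_cancel, add_sub_cancel_right, sub_add_add_cancel] at h'
    linear_combination qint q (betaAt M N i * m) * h + qint q (cartanOff M i * m) * h'
      + qint q (alphaAt M i * m + betaAt M N i * m) * hsq
  · rw [if_neg hij.ne']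
    simp only [alphaBetaAt, min_eq_right hij.le, max_eq_left hij.le,
      min_eq_right (show j - 1 ≤ i by omega), max_eq_left (show j - 1 ≤ i by omega),
      min_eq_right (show j + 1 ≤ i by omega), max_eq_left (show j + 1 ≤ i by omega),
      alphaAt_sub_one, alphaAt_add_one, add_mul, sub_mul]
    have h := qint_recurrence q hq (alphaAt M j * m) _ _ hst
    linear_combination qint q (betaAt M N i * m) * h

/-- Each column of the q-deformed Cartan matrix has at most three nonzero entries. -/
lemma qint_CartanSL (M N : ℕ) (q : ℂ) (m : ℤ) (k j : Fin (M + N + 1)) :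
    qint q (CartanSL M N k j * m)
      = (if (k : ℕ) + 1 = j then qint q (cartanOff M (j - 1) * m) else 0)
        - (if (k : ℕ) = j then qint q ((cartanOff M (j - 1) + cartanOff M j) * m) else 0)
        + (if (k : ℕ) = j + 1 then qint q (cartanOff M j * m) else 0) := by
  rcases lt_trichotomy (k : ℕ) j with h | h | h
  · rw [if_neg h.ne, if_neg (show ¬(k : ℕ) = j + 1 by omega), CartanSL,
      if_neg (Fin.val_ne_iff.mp h.ne), min_eq_left h.le]
    split_ifs <;> simp_all [cartanOff, qint_zero] <;> grind
  · obtain rfl := Fin.ext h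
    rw [if_neg (by omega), if_pos rfl, if_neg (by omega), CartanSL, if_pos rfl, zero_sub,
      add_zero, ← qint_neg, ← neg_mul]
    congr 2
    unfold cartanOff
    split_ifs <;> omega
  · rw [if_neg h.ne', if_neg (show ¬(k : ℕ) + 1 = j by omega), CartanSL,
      if_neg (Fin.val_ne_iff.mp h.ne'), min_eq_right h.le]
    split_ifs <;> simp_all [cartanOff, qint_zero] <;> grind

lemma qint_alphaC_mul_qint_betaC (M N : ℕ) (q : ℂ) (m : ℤ) {n : ℕ} (i k : Fin n) :
    qint q (alphaC M i k * m) * qint q (betaC M N i k * m)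
      = alphaBetaAt q m M N (i : ℕ) (k : ℕ) := by
  have hα : alphaC M i k = alphaAt M (min ((i : ℕ) : ℤ) (k : ℕ)) := by
    unfold alphaC alphaAt; norm_cast
  have hβ : betaC M N i k = betaAt M N (max ((i : ℕ) : ℤ) (k : ℕ)) := by
    unfold betaC betaAt; norm_cast
  rw [hα, hβ, alphaBetaAt]

lemma alphaBetaAt_neg_one (q : ℂ) (m : ℤ) (M N i : ℕ) : alphaBetaAt q m M N i (-1) = 0 := by
  rw [alphaBetaAt, min_eq_right (by omega), alphaAt, if_pos (by omega)]
  simp [qint_zero]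

lemma alphaBetaAt_last (q : ℂ) (m : ℤ) (M N i : ℕ) (hi : i < M + N + 1) :
    alphaBetaAt q m M N i (M + N + 1) = 0 := by
  rw [alphaBetaAt, max_eq_right (by omega), betaAt, if_neg (by omega),
    show (-M - N - 2 + (M + N + 1 + 1) : ℤ) = 0 by ring, zero_mul, qint_zero, mul_zero]

/-- q-deformed inverse Cartan matrix identity:
`Σ_k [α_{ik}m]_q [β_{ik}m]_q [A_{kj}m]_q = δ_{ij} [(M−N)m]_q ([m]_q)²`. -/
theorem qdeformed_inverse_Cartan (M N : ℕ) (hMN : M ≠ N) (q : ℂ) (hq : q ≠ 0)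
    (hq2 : q ^ 2 ≠ 1) (m : ℕ) (hm : 1 ≤ m) (i j : Fin (M + N + 1)) :
    (∑ k : Fin (M + N + 1),
      qint q (alphaC M i k * (m : ℤ)) * qint q (betaC M N i k * (m : ℤ)) *
        qint q (CartanSL M N k j * (m : ℤ)))
    = (if i = j then 1 else 0) * qint q (((M : ℤ) - (N : ℤ)) * (m : ℤ)) *
        (qint q (m : ℤ)) ^ 2 := by
  simp only [qint_alphaC_mul_qint_betaC, qint_CartanSL, mul_add, mul_sub, mul_ite, mul_zero,
    Finset.sum_add_distrib, Finset.sum_sub_distrib]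
  have hj := j.isLt
  rw [ite_mul, ite_mul, one_mul, zero_mul, zero_mul]
  have key := alphaBetaAt_cartan q hq m M N (i : ℕ) (j : ℕ)
  simp only [Nat.cast_inj, Fin.val_inj] at key
  rw [← key]
  congr 1
  · congr 1
    · rw [Fin.sum_univ_eq_sum_range (fun k : ℕ ↦ if k + 1 = (j : ℕ) then
        alphaBetaAt q m M N (i : ℕ) k * qint q (cartanOff M ((j : ℕ) - 1) * m) else 0)]
      rcases h : (j : ℕ) with _ | l
      · simp [alphaBetaAt_neg_one]
      · simp only [Nat.add_right_cancel_iff, Finset.sum_ite_eq', Finset.mem_range]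
        rw [if_pos (by omega)]
        push_cast
        rw [add_sub_cancel_right]
    · simp [Fin.val_inj]
  · rw [Fin.sum_univ_eq_sum_range (fun k : ℕ ↦ if k = (j : ℕ) + 1 then
      alphaBetaAt q m M N (i : ℕ) k * qint q (cartanOff M (j : ℕ) * m) else 0)]
    simp only [Finset.sum_ite_eq', Finset.mem_range]
    split_ifs with h
    · push_cast
      rfl
    · rw [show ((j : ℕ) : ℤ) + 1 = M + N + 1 by omega, alphaBetaAt_last q m M N i i.isLt, zero_mul]
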